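/- arXiv:1501.03566 — 2 statements merged into one kernel-verified Lean document; each statement's English description precedes it below -/
import Mathlib

section
/- Let d ≥ 1 and let M be a t×n binary matrix with n > t that is d-disjunct. Then t ≥ ((15+√33)/24)·d². -/
open Finset

/-- A family of columns (each column = the finset of rows where it has a 1)
is `d`-disjunct if no column is contained in the union of `≤ d` other columns. -/
def Disjunct {ι ρ : Type*} [DecidableEq ρ] (d : ℕ) (col : ι → Finset ρ) : Prop :=
  ∀ j : ι, ∀ S : Finset ι, j ∉ S → S.card ≤ d → ¬ col j ⊆ S.biUnion col

/-- A column `j` is isolated if it contains a row belonging to no other column. -/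
def IsolatedCol {ι ρ : Type*} (col : ι → Finset ρ) (j : ι) : Prop :=
  ∃ i ∈ col j, ∀ j', i ∈ col j' → j' = j

/-!
Call a pair of rows of a column private if no other column contains both rows. Different columns
have different private pairs, so with more columns than rows `t`, counting pairs of rows gives a
column with at most `t / 2` private pairs.

Deleting an isolated column together with a row that only it contains, we may assume that no column
is isolated. In a column with `k = d + 1 + s` rows, `s + 1` disjoint non-private pairs and the
`k - 2 * (s + 1)` remaining rows would be covered by `d` other columns. So the non-private pairs
form a graph with matching number at most `s`, and the Erdős–Gallai theorem, proved by shifting,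
leaves at least `C * d ^ 2 / 2` private pairs as long as `k ≤ C * (2 * d - 1)`, where
`C = (15 + √33) / 24`.

A column with more rows than that is deleted together with all its rows. This lowers `d` by one and
the number of rows by at least `C * (2 * d - 1) = C * d ^ 2 - C * (d - 1) ^ 2`, so induction on `d`
applies.
-/

open scoped FinsetFamily

section Matching

variable {α β : Type*} {s : ℕ} {𝒜 : Finset (Finset α)}

/-- The matching number of the set family `𝒜`, that is, the largest number of pairwise disjoint
members of `𝒜`, is at most `s`. -/
def MatchingNumberLE (s : ℕ) (𝒜 : Finset (Finset α)) : Prop :=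
  ∀ ℳ ⊆ 𝒜, (ℳ : Set (Finset α)).PairwiseDisjoint id → #ℳ ≤ s

theorem pairwiseDisjoint_map_mapEmbedding (f : α ↪ β) :
    ((𝒜.map (mapEmbedding f).toEmbedding : Finset (Finset β)) : Set (Finset β)).PairwiseDisjoint id
      ↔ (𝒜 : Set (Finset α)).PairwiseDisjoint id := by
  rw [coe_map, (mapEmbedding f).toEmbedding.injective.injOn.pairwiseDisjoint_image]
  simp only [Set.PairwiseDisjoint, Set.Pairwise, Function.onFun, Function.comp_apply, id,
    RelEmbedding.coe_toEmbedding, mapEmbedding_apply, disjoint_map]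

theorem matchingNumberLE_map (f : α ↪ β) :
    MatchingNumberLE s (𝒜.map (mapEmbedding f).toEmbedding) ↔ MatchingNumberLE s 𝒜 := by
  constructor
  · intro h ℳ hℳ hdisj
    simpa only [card_map] using
      h _ (map_subset_map.2 hℳ) ((pairwiseDisjoint_map_mapEmbedding f).2 hdisj)
  · intro h ℳ hℳ hdisj
    obtain ⟨ℳ', hℳ', rfl⟩ := subset_map_iff.1 hℳ
    rw [card_map]
    exact h ℳ' hℳ' ((pairwiseDisjoint_map_mapEmbedding f).1 hdisj)

variable [DecidableEq α] {i j : α} {e : Finset α}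

theorem map_swap_of_mem_of_notMem (hi : i ∈ e) (hj : j ∉ e) :
    e.map (Equiv.swap i j).toEmbedding = (e ∪ {j}) \ {i} := by
  ext x
  rw [mem_map_equiv, Equiv.symm_swap, Equiv.swap_apply_def]
  split_ifs <;> grind

theorem map_swap_of_notMem (hi : i ∉ e) (hj : j ∉ e) :
    e.map (Equiv.swap i j).toEmbedding = e := by
  ext x
  rw [mem_map_equiv, Equiv.symm_swap, Equiv.swap_apply_def]
  split_ifs <;> grind

theorem map_swap_mem_of_mem_compression_of_notMem (he : e ∈ 𝓒 {i} {j} 𝒜) (he' : e ∉ 𝒜) :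
    e.map (Equiv.swap i j).toEmbedding ∈ 𝒜 := by
  rw [map_swap_of_mem_of_notMem
    (singleton_subset_iff.1 (UV.le_of_mem_compression_of_notMem he he'))
    (disjoint_singleton_left.1 (UV.disjoint_of_mem_compression_of_notMem he he'))]
  exact UV.sup_sdiff_mem_of_mem_compression_of_notMem he he'

theorem map_swap_mem_of_mem_compression (he : e ∈ 𝓒 {i} {j} 𝒜) (hi : i ∉ e) :
    e.map (Equiv.swap i j).toEmbedding ∈ 𝒜 := by
  by_cases hj : j ∈ e
  · rw [Equiv.swap_comm, map_swap_of_mem_of_notMem hj hi]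
    exact UV.sup_sdiff_mem_of_mem_compression he (singleton_subset_iff.2 hj)
      (disjoint_singleton_left.2 hi)
  · rw [map_swap_of_notMem hi hj]
    by_contra he'
    exact hi (singleton_subset_iff.1 (UV.le_of_mem_compression_of_notMem he he'))

/-- If a matching of the compressed family uses a new set `m`, then `m` is its only member
containing `i`, so exchanging `i` and `j` throughout turns it into a matching of the original
family. -/
theorem MatchingNumberLE.compression (h : MatchingNumberLE s 𝒜) (i j : α) :
    MatchingNumberLE s (𝓒 {i} {j} 𝒜) := by
  intro ℳ hℳ hdisj
  by_cases hold : ℳ ⊆ 𝒜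
  · exact h ℳ hold hdisj
  obtain ⟨m, hm, hm𝒜⟩ := not_subset.1 hold
  have hi : i ∈ m :=
    singleton_subset_iff.1 (UV.le_of_mem_compression_of_notMem (hℳ hm) hm𝒜)
  have hswap : ℳ.map (mapEmbedding (Equiv.swap i j).toEmbedding).toEmbedding ⊆ 𝒜 := by
    intro e' he'
    obtain ⟨e, he, rfl⟩ := mem_map.1 he'
    obtain rfl | hne := eq_or_ne e m
    · exact map_swap_mem_of_mem_compression_of_notMem (hℳ he) hm𝒜
    · exact map_swap_mem_of_mem_compression (hℳ he)
        fun hie => disjoint_left.1 (hdisj he hm hne) hie hi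
  simpa only [card_map] using h _ hswap ((pairwiseDisjoint_map_mapEmbedding _).2 hdisj)

end Matching

section Shifting

variable {i j k r s : ℕ} {e : Finset ℕ} {𝒜 : Finset (Finset ℕ)}

/-- A family of sets of naturals is shifted if replacing an element of a member by a smaller
natural not in it again yields a member. -/
def IsShifted (𝒜 : Finset (Finset ℕ)) : Prop :=
  ∀ ⦃i j⦄, i < j → UV.IsCompressed {i} {j} 𝒜

/-- The sum of all elements of all members of a family, which decreases under shifting. -/
def weight (𝒜 : Finset (Finset ℕ)) : ℕ := ∑ e ∈ 𝒜, ∑ x ∈ e, x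

theorem sum_compress_lt (hij : i < j) (he : UV.compress {i} {j} e ≠ e) :
    ∑ x ∈ UV.compress {i} {j} e, x < ∑ x ∈ e, x := by
  have hmoved : i ∉ e ∧ j ∈ e := by
    by_contra hfix
    exact he (if_neg (by simpa using hfix))
  obtain ⟨hi, hj⟩ := hmoved
  rw [UV.compress_of_disjoint_of_le (by simpa using hi) (by simpa using hj), sup_eq_union,
    union_comm, ← insert_eq, ← erase_eq, erase_insert_of_ne hij.ne,
    sum_insert (fun h => hi (mem_of_mem_erase h)), ← add_sum_erase e (fun x => x) hj]
  simpa using hij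

theorem weight_compression_lt (hij : i < j) (h : ¬ UV.IsCompressed {i} {j} 𝒜) :
    weight (𝓒 {i} {j} 𝒜) < weight 𝒜 := by
  have hmoved : ({e ∈ 𝒜 | UV.compress {i} {j} e ∉ 𝒜}).Nonempty := by
    by_contra hempty
    rw [not_nonempty_iff_eq_empty] at hempty
    refine h ?_
    rw [UV.IsCompressed, UV.compression, filter_image, hempty, image_empty, union_empty]
    simpa [filter_eq_empty_iff] using hempty
  rw [weight, weight, UV.compression, sum_union UV.compress_disjoint, filter_image,
    sum_image UV.compress_injOn, ← sum_filter_add_sum_filter_not 𝒜 (UV.compress {i} {j} · ∈ 𝒜),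
    add_lt_add_iff_left]
  refine sum_lt_sum_of_nonempty hmoved fun e he => sum_compress_lt hij fun heq => ?_
  rw [mem_filter, heq] at he
  exact he.2 he.1

theorem compression_subset_powersetCard_range (hij : i < j)
    (h𝒜 : 𝒜 ⊆ powersetCard r (range k)) : 𝓒 {i} {j} 𝒜 ⊆ powersetCard r (range k) := by
  intro e he
  obtain ⟨he𝒜, -⟩ | ⟨-, b, hb, rfl⟩ := UV.mem_compression.1 he
  · exact h𝒜 he𝒜
  obtain ⟨hbk, hbr⟩ := mem_powersetCard.1 (h𝒜 hb)
  refine mem_powersetCard.2 ⟨?_, (UV.card_compress (by simp) b).trans hbr⟩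
  rw [UV.compress]
  split_ifs with hmoved
  · have hjk : j < k := mem_range.1 (hbk (singleton_subset_iff.1 hmoved.2))
    exact sdiff_subset.trans
      (union_subset hbk (singleton_subset_iff.2 (mem_range.2 (hij.trans hjk))))
  · exact hbk

theorem exists_isShifted (h𝒜 : 𝒜 ⊆ powersetCard r (range k)) (hs : MatchingNumberLE s 𝒜) :
    ∃ ℬ ⊆ powersetCard r (range k), #ℬ = #𝒜 ∧ MatchingNumberLE s ℬ ∧ IsShifted ℬ := by
  obtain ⟨ℬ, ⟨hℬ, hcard, hℬs⟩, hmin⟩ := exists_minimalFor_of_wellFoundedLT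
    (fun ℬ : Finset (Finset ℕ) =>
      ℬ ⊆ powersetCard r (range k) ∧ #ℬ = #𝒜 ∧ MatchingNumberLE s ℬ) weight ⟨𝒜, h𝒜, rfl, hs⟩
  refine ⟨ℬ, hℬ, hcard, hℬs, fun i j hij => ?_⟩
  by_contra hnot
  have hlt := weight_compression_lt hij hnot
  exact hlt.not_ge (hmin ⟨compression_subset_powersetCard_range hij hℬ,
    (UV.card_compression _ _ _).trans hcard, hℬs.compression i j⟩ hlt.le)

theorem IsShifted.insert_mem (h : IsShifted 𝒜) (hij : i < j) (hi : i ∉ e) (hj : j ∉ e)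
    (he : insert j e ∈ 𝒜) : insert i e ∈ 𝒜 := by
  rw [← (h hij).eq] at he
  have hmem := UV.sup_sdiff_mem_of_mem_compression he (by simp) (by simp [hi, hij.ne])
  convert hmem using 1
  ext x
  grind

theorem IsShifted.pair_mem {a b a' b' : ℕ} (h : IsShifted 𝒜) (hmem : {a, b} ∈ 𝒜) (hab : a < b)
    (ha : a' ≤ a) (hb : b' ≤ b) (hab' : a' < b') : {a', b'} ∈ 𝒜 := by
  have hmem' : {a', b} ∈ 𝒜 := by
    obtain rfl | hlt := ha.eq_or_lt
    · exact hmem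
    · exact h.insert_mem hlt (by simp; omega) (by simp; omega) hmem
  obtain rfl | hlt := hb.eq_or_lt
  · exact hmem'
  · rw [pair_comm] at hmem' ⊢
    exact h.insert_mem hlt (by simp; omega) (by simp; omega) hmem'

theorem MatchingNumberLE.exists_pair_notMem (h : MatchingNumberLE s 𝒜) :
    ∃ i ≤ s, {i, 2 * s + 1 - i} ∉ 𝒜 := by
  by_contra! hall
  let nested : ℕ → Finset ℕ := fun i => {i, 2 * s + 1 - i}
  have hinter : ∀ i ∈ range (s + 1), ∀ i' ∈ range (s + 1), i ≠ i' →
      Disjoint (nested i) (nested i') := by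
    intro i hi i' hi' hne
    simp only [nested, mem_range, disjoint_insert_left, disjoint_singleton_left, mem_insert,
      mem_singleton] at *
    omega
  have hinj : Set.InjOn nested (range (s + 1)) := by
    intro i hi i' hi' heq
    by_contra hne
    have hdisj := hinter i hi i' hi' hne
    rw [← heq, disjoint_self_iff_empty] at hdisj
    exact insert_ne_empty _ _ hdisj
  have hcard := h ((range (s + 1)).image nested)
    (image_subset_iff.2 fun i hi => hall i (mem_range_succ_iff.1 hi)) (by
      rw [coe_image, hinj.pairwiseDisjoint_image]
      exact hinter)
  rw [card_image_of_injOn hinj, card_range] at hcard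
  omega

theorem IsShifted.card_le_of_pair_notMem {m : ℕ} (h : IsShifted 𝒜)
    (h𝒜 : 𝒜 ⊆ powersetCard 2 (range k)) (him : i < m) (hnot : {i, m} ∉ 𝒜) :
    #𝒜 ≤ m.choose 2 + i * (k - m) := by
  have hcover : 𝒜 ⊆ powersetCard 2 (range m) ∪
      (range i ×ˢ Ico m k).image (fun p => {p.1, p.2}) := by
    intro e he
    obtain ⟨hek, hecard⟩ := mem_powersetCard.1 (h𝒜 he)
    obtain ⟨a, b, hab, rfl⟩ : ∃ a b, a < b ∧ e = {a, b} := by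
      obtain ⟨a, b, hne, rfl⟩ := card_eq_two.1 hecard
      obtain hlt | hlt := hne.lt_or_gt
      · exact ⟨a, b, hlt, rfl⟩
      · exact ⟨b, a, hlt, pair_comm a b⟩
    have hbk : b < k := mem_range.1 (hek (by simp))
    obtain hbm | hmb := lt_or_ge b m
    · refine mem_union_left _ (mem_powersetCard.2 ⟨?_, hecard⟩)
      simp only [insert_subset_iff, singleton_subset_iff, mem_range]
      omega
    · have hai : a < i := by
        by_contra! hia
        exact hnot (h.pair_mem he hab hia hmb him)
      exact mem_union_right _ (mem_image.2 ⟨(a, b), by simp [hai, hmb, hbk], rfl⟩)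
  calc #𝒜 ≤ #(powersetCard 2 (range m)) + #((range i ×ˢ Ico m k).image _) :=
        (card_le_card hcover).trans (card_union_le _ _)
    _ ≤ #(powersetCard 2 (range m)) + #(range i ×ˢ Ico m k) := by gcongr; exact card_image_le
    _ = m.choose 2 + i * (k - m) := by simp

end Shifting

section ErdosGallai

/-- The left-hand side is a convex function of `i`, so it is largest at `i = 0` or `i = s`. -/
theorem choose_two_add_mul_le_max {i k s : ℕ} (hi : i ≤ s) (hk : 2 * s + 1 ≤ k) :
    (2 * s + 1 - i).choose 2 + i * (k - (2 * s + 1 - i)) ≤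
      max ((2 * s + 1).choose 2) (s.choose 2 + s * (k - s)) := by
  obtain ⟨r, rfl⟩ := Nat.exists_eq_add_of_le hi
  obtain ⟨l, rfl⟩ := Nat.exists_eq_add_of_le hk
  have hm : 2 * (i + r) + 1 - i = i + 2 * r + 1 := by omega
  have hl : 2 * (i + r) + 1 + l - (i + 2 * r + 1) = i + l := by omega
  have hs : 2 * (i + r) + 1 + l - (i + r) = i + r + 1 + l := by omega
  rw [hm, hl, hs, le_max_iff, ← Nat.cast_le (α := ℚ), ← Nat.cast_le (α := ℚ)]
  push_cast [Nat.cast_choose_two]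
  have hi0 : (0 : ℚ) ≤ i := i.cast_nonneg
  have hr0 : (0 : ℚ) ≤ r := r.cast_nonneg
  obtain hle | hge := le_total ((2 * l : ℚ)) (i + 4 * r + 1)
  · left
    nlinarith [mul_nonneg hi0 (sub_nonneg.2 hle)]
  · right
    nlinarith [mul_nonneg hr0 (sub_nonneg.2 hge)]

theorem erdos_gallai_range {k s : ℕ} {𝒜 : Finset (Finset ℕ)}
    (h𝒜 : 𝒜 ⊆ powersetCard 2 (range k)) (hs : MatchingNumberLE s 𝒜) :
    #𝒜 ≤ max ((2 * s + 1).choose 2) (s.choose 2 + s * (k - s)) := by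
  obtain hk | hk := le_total k (2 * s + 1)
  · calc #𝒜 ≤ #(powersetCard 2 (range k)) := card_le_card h𝒜
      _ = k.choose 2 := by simp
      _ ≤ (2 * s + 1).choose 2 := Nat.choose_le_choose 2 hk
      _ ≤ _ := le_max_left _ _
  · obtain ⟨ℬ, hℬ, hcard, hℬs, hshift⟩ := exists_isShifted h𝒜 hs
    obtain ⟨i, hi, hnot⟩ := hℬs.exists_pair_notMem
    rw [← hcard]
    exact (hshift.card_le_of_pair_notMem hℬ (by omega) hnot).trans (choose_two_add_mul_le_max hi hk)

theorem erdos_gallai {α : Type*} {s : ℕ} {V : Finset α} {𝒜 : Finset (Finset α)}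
    (h𝒜 : 𝒜 ⊆ powersetCard 2 V) (hs : MatchingNumberLE s 𝒜) :
    #𝒜 ≤ max ((2 * s + 1).choose 2) (s.choose 2 + s * (#V - s)) := by
  let incl : V ↪ α := Function.Embedding.subtype _
  let num : V ↪ ℕ := V.equivFin.toEmbedding.trans Fin.valEmbedding
  have hincl : V = univ.map incl := V.attach_map_val.symm
  have hnum : univ.map num = range #V := by
    rw [← map_map, map_univ_equiv, Fin.map_valEmbedding_univ, Nat.Iio_eq_range]
  rw [hincl, powersetCard_map] at h𝒜
  obtain ⟨ℬ, hℬ, rfl⟩ := subset_map_iff.1 h𝒜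
  rw [matchingNumberLE_map] at hs
  have hℬ' : ℬ.map (mapEmbedding num).toEmbedding ⊆ powersetCard 2 (range #V) := by
    rw [← hnum, powersetCard_map]
    exact map_subset_map.2 hℬ
  simpa only [card_map] using erdos_gallai_range hℬ' ((matchingNumberLE_map num).2 hs)

end ErdosGallai

section Columns

variable {ι κ ρ : Type*} {d : ℕ} {col : ι → Finset ρ} {j : ι}

/-- The set of rows `e` is shared for the column `j` if some other column contains all of it. -/
def IsShared (col : ι → Finset ρ) (j : ι) (e : Finset ρ) : Prop :=
  ∃ j' ≠ j, e ⊆ col j'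

open Classical in
/-- The pairs of rows of the column `j` that occur together in another column as well. -/
noncomputable def sharedPairs (col : ι → Finset ρ) (j : ι) : Finset (Finset ρ) :=
  {e ∈ powersetCard 2 (col j) | IsShared col j e}

open Classical in
/-- The pairs of rows of the column `j` that occur together in no other column. -/
noncomputable def privatePairs (col : ι → Finset ρ) (j : ι) : Finset (Finset ρ) :=
  {e ∈ powersetCard 2 (col j) | ¬ IsShared col j e}

theorem card_sharedPairs_add_card_privatePairs (col : ι → Finset ρ) (j : ι) :
    #(sharedPairs col j) + #(privatePairs col j) = (#(col j)).choose 2 := by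
  classical
  rw [← card_powersetCard, sharedPairs, privatePairs, card_filter_add_card_filter_not]

theorem isShared_singleton_of_not_isolatedCol {x : ρ} (hj : ¬ IsolatedCol col j)
    (hx : x ∈ col j) : IsShared col j {x} := by
  by_contra hpriv
  refine hj ⟨x, hx, fun j' hx' => ?_⟩
  by_contra hne
  exact hpriv ⟨j', hne, singleton_subset_iff.2 hx'⟩

variable [DecidableEq ρ]

namespace Disjunct

theorem comp (h : Disjunct d col) {f : κ → ι} (hf : Function.Injective f) :
    Disjunct d (col ∘ f) := by
  classical
  intro j S hjS hS hsub
  refine h (f j) (S.map ⟨f, hf⟩) (by simpa [hf.eq_iff] using hjS) (by rwa [card_map]) ?_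
  rwa [map_eq_image, image_biUnion]

theorem sdiff (h : Disjunct (d + 1) col) (j₀ : ι) :
    Disjunct d fun j : {j // j ≠ j₀} => col j \ col j₀ := by
  classical
  intro j S hjS hS hsub
  refine h j (insert j₀ (S.map (Function.Embedding.subtype _))) (by simp [j.2, hjS])
    ((card_insert_le _ _).trans (by simpa using hS)) ?_
  intro x hx
  by_cases hx₀ : x ∈ col j₀
  · simp [hx₀]
  obtain ⟨l, hl, hxl⟩ := mem_biUnion.1 (hsub (mem_sdiff.2 ⟨hx, hx₀⟩))
  exact mem_biUnion.2
    ⟨l, mem_insert_of_mem (mem_map_of_mem _ hl), (mem_sdiff.1 hxl).1⟩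

theorem not_subset_biUnion_of_isShared (h : Disjunct d col) {𝒬 : Finset (Finset ρ)}
    (hcard : #𝒬 ≤ d) (hshared : ∀ e ∈ 𝒬, IsShared col j e) : ¬ col j ⊆ 𝒬.biUnion id := by
  classical
  intro hsub
  have : Nonempty ι := ⟨j⟩
  choose! g hgj hg using hshared
  refine h j (𝒬.image g) ?_ (card_image_le.trans hcard) (hsub.trans ?_)
  · rw [mem_image]
    exact fun ⟨e, he, hej⟩ => hgj e he hej
  · rw [image_biUnion]
    exact biUnion_mono hg

/-- Otherwise the members of `ℳ`, together with a singleton for every row of column `j` missed by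
`ℳ`, would be at most `d` shared sets covering that column. -/
theorem add_sum_card_lt (h : Disjunct d col) (hj : ¬ IsolatedCol col j)
    {ℳ : Finset (Finset ρ)} (hdisj : (ℳ : Set (Finset ρ)).PairwiseDisjoint id)
    (hsub : ∀ e ∈ ℳ, e ⊆ col j) (hshared : ∀ e ∈ ℳ, IsShared col j e) :
    d + ∑ e ∈ ℳ, #e < #ℳ + #(col j) := by
  by_contra! hle
  have hunion : ℳ.biUnion id ⊆ col j := biUnion_subset.2 hsub
  let rest : Finset (Finset ρ) := (col j \ ℳ.biUnion id).image ({·})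
  have hrest : #rest + ∑ e ∈ ℳ, #e ≤ #(col j) := by
    calc #rest + ∑ e ∈ ℳ, #e ≤ #(col j \ ℳ.biUnion id) + #(ℳ.biUnion id) := by
          rw [card_biUnion hdisj]; gcongr; exacts [card_image_le, le_rfl]
      _ = #(col j) := card_sdiff_add_card_eq_card hunion
  refine h.not_subset_biUnion_of_isShared (j := j) (𝒬 := ℳ ∪ rest)
    ((card_union_le _ _).trans (by omega)) ?_ ?_
  · intro e he
    obtain he | he := mem_union.1 he
    · exact hshared e he
    · obtain ⟨x, hx, rfl⟩ := mem_image.1 he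
      exact isShared_singleton_of_not_isolatedCol hj (mem_sdiff.1 hx).1
  · rw [union_biUnion, image_biUnion]
    simp only [id_eq, biUnion_singleton_eq_self, union_sdiff_self_eq_union]
    exact subset_union_right

theorem lt_card (h : Disjunct d col) (hj : ¬ IsolatedCol col j) : d < #(col j) := by
  simpa using h.add_sum_card_lt hj (ℳ := ∅) (by simp) (by simp) (by simp)

theorem matchingNumberLE_sharedPairs (h : Disjunct d col) (hj : ¬ IsolatedCol col j) :
    MatchingNumberLE (#(col j) - d - 1) (sharedPairs col j) := by
  intro ℳ hℳ hdisj
  have hpairs : ∀ e ∈ ℳ, (e ⊆ col j ∧ #e = 2) ∧ IsShared col j e := by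
    simpa only [sharedPairs, subset_iff, mem_filter, mem_powersetCard] using hℳ
  have hlt := h.add_sum_card_lt hj hdisj (fun e he => (hpairs e he).1.1)
    fun e he => (hpairs e he).2
  rw [sum_const_nat fun e he => (hpairs e he).1.2] at hlt
  omega

end Disjunct

theorem sum_card_privatePairs_le [Fintype ι] (col : ι → Finset ρ) :
    ∑ j, #(privatePairs col j) ≤ (#(univ.biUnion col)).choose 2 := by
  classical
  have hdisj : ((univ : Finset ι) : Set ι).PairwiseDisjoint (privatePairs col) := by
    intro a _ b _ hab
    refine disjoint_left.2 fun e ha hb => (mem_filter.1 ha).2 ⟨b, hab.symm, ?_⟩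
    exact (mem_powersetCard.1 (mem_filter.1 hb).1).1
  rw [← card_biUnion hdisj, ← card_powersetCard]
  refine card_le_card (biUnion_subset.2 fun j _ => (filter_subset _ _).trans ?_)
  exact powersetCard_mono (subset_biUnion_of_mem col (mem_univ j))

theorem exists_two_mul_card_privatePairs_le [Fintype ι] [Nonempty ι]
    (hcard : #(univ.biUnion col) ≤ Fintype.card ι) :
    ∃ j, 2 * #(privatePairs col j) ≤ #(univ.biUnion col) := by
  by_contra! hlt
  have hsum : ∑ _j : ι, #(univ.biUnion col) < ∑ j, 2 * #(privatePairs col j) :=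
    sum_lt_sum_of_nonempty univ_nonempty fun j _ => hlt j
  rw [sum_const, card_univ, smul_eq_mul, ← mul_sum] at hsum
  have hchoose : 2 * (#(univ.biUnion col)).choose 2 ≤
      #(univ.biUnion col) * #(univ.biUnion col) := by
    rw [Nat.choose_two_right]
    exact (Nat.mul_div_le _ _).trans (Nat.mul_le_mul_left _ (Nat.sub_le _ _))
  nlinarith [sum_card_privatePairs_le col]

theorem card_biUnion_sdiff_add_card [Fintype ι] [DecidableEq ι] (col : ι → Finset ρ) (j₀ : ι) :
    #(univ.biUnion fun j : {j // j ≠ j₀} => col j \ col j₀) + #(col j₀) ≤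
      #(univ.biUnion col) := by
  rw [← card_union_of_disjoint ((disjoint_biUnion_left _ _ _).2 fun _ _ => sdiff_disjoint)]
  refine card_le_card (union_subset (biUnion_subset.2 fun j _ => sdiff_subset.trans ?_) ?_) <;>
    exact subset_biUnion_of_mem col (mem_univ _)

/-- Deleting an isolated column, together with a row that only it contains, preserves the
inequality; so a minimal subfamily satisfying it has no isolated column. -/
theorem exists_forall_not_isolatedCol [Fintype ι]
    (hcard : #(univ.biUnion col) < Fintype.card ι) :
    ∃ J : Finset ι, #(univ.biUnion fun j : J => col j) < Fintype.card J ∧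
      ∀ j : J, ¬ IsolatedCol (fun i : J => col i) j := by
  classical
  obtain ⟨J, hJ⟩ := exists_minimal_of_wellFoundedLT
    (fun J : Finset ι => #(J.biUnion col) < #J) ⟨univ, hcard⟩
  refine ⟨J, ?_, ?_⟩
  · rw [univ_eq_attach, attach_biUnion, Fintype.card_coe]
    exact hJ.prop
  rintro ⟨j, hj⟩ ⟨x, hx, hpriv⟩
  have hsub : (J.erase j).biUnion col ⊆ (J.biUnion col).erase x := by
    intro y hy
    obtain ⟨l, hl, hyl⟩ := mem_biUnion.1 hy
    obtain ⟨hlj, hlJ⟩ := mem_erase.1 hl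
    refine mem_erase.2 ⟨?_, mem_biUnion.2 ⟨l, hlJ, hyl⟩⟩
    rintro rfl
    exact hlj (congrArg Subtype.val (hpriv ⟨l, hlJ⟩ hyl))
  have hcard := card_le_card hsub
  rw [card_erase_of_mem (mem_biUnion.2 ⟨j, hj, hx⟩)] at hcard
  have hlt := hJ.prop
  refine hJ.not_prop_of_lt (erase_ssubset hj) ?_
  have hpos : 0 < #(J.biUnion col) := card_pos.2 ⟨x, mem_biUnion.2 ⟨j, hj, hx⟩⟩
  rw [card_erase_of_mem hj]
  omega

end Columns

section Constant

/-- The constant of the lower bound: the larger root of `12 * C ^ 2 = 15 * C - 4`. -/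
noncomputable def disjunctConst : ℝ := (15 + Real.sqrt 33) / 24

theorem disjunctConst_quadratic : 12 * disjunctConst ^ 2 = 15 * disjunctConst - 4 := by
  have hsq : Real.sqrt 33 ^ 2 = 33 := Real.sq_sqrt (by norm_num)
  rw [disjunctConst]
  linear_combination hsq / 48

theorem lt_disjunctConst : 0.86 < disjunctConst := by
  have : 5.64 < Real.sqrt 33 := Real.lt_sqrt_of_sq_lt (by norm_num)
  rw [disjunctConst]
  linarith

theorem disjunctConst_lt : disjunctConst < 0.87 := by
  have : Real.sqrt 33 < 5.88 := (Real.sqrt_lt' (by norm_num)).2 (by norm_num)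
  rw [disjunctConst]
  linarith

/-- The difference of the two sides is concave in `s`, so it suffices to look at `s = 0` and at the
largest admissible `s`; there, `disjunctConst_quadratic` makes the terms in `d ^ 2` cancel. -/
theorem disjunctConst_mul_sq_add_le {d s : ℝ} (hs : 0 ≤ s)
    (hds : d + 1 + s ≤ disjunctConst * (2 * d - 1)) :
    disjunctConst * d ^ 2 + (2 * s + 1) * (2 * s) ≤ (d + 1 + s) * (d + s) := by
  have hC := disjunctConst_quadratic
  have hlt := lt_disjunctConst
  have hgt := disjunctConst_lt
  set C := disjunctConst
  have hd : 2 ≤ d := by nlinarith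
  obtain ⟨t, ht⟩ : ∃ t, t = C * (2 * d - 1) - d - 1 := ⟨_, rfl⟩
  have hst : s ≤ t := by linarith
  have hzero : C * d ^ 2 ≤ (d + 1) * d := by nlinarith
  have hmax : C * d ^ 2 + (2 * t + 1) * (2 * t) ≤ (d + 1 + t) * (d + t) := by
    have hlinear : (d + 1 + t) * (d + t) - (2 * t + 1) * (2 * t) - C * d ^ 2
        = (17 * C - 10) * d - (3 * C ^ 2 + 5 * C + 2) := by
      rw [ht]
      linear_combination (d - d ^ 2) * hC
    nlinarith
  obtain hslope | hslope := le_total (3 * s) (2 * d - 1)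
  · nlinarith [mul_nonneg hs (sub_nonneg.2 hslope)]
  · nlinarith [mul_nonneg (sub_nonneg.2 hst) (by linarith : 0 ≤ 3 * (s + t) - (2 * d - 1))]

theorem disjunctConst_mul_sq_add_two_mul_max_le {d s : ℕ}
    (hds : (d + 1 + s : ℝ) ≤ disjunctConst * (2 * d - 1)) :
    disjunctConst * d ^ 2 +
        2 * (max ((2 * s + 1).choose 2) (s.choose 2 + s * (d + 1)) : ℕ) ≤
      2 * ((d + 1 + s).choose 2 : ℕ) := by
  have hs : (0 : ℝ) ≤ s := s.cast_nonneg
  obtain hmax | hmax := max_choice ((2 * s + 1).choose 2) (s.choose 2 + s * (d + 1)) <;>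
    rw [hmax] <;> push_cast [Nat.cast_choose_two]
  · linarith [disjunctConst_mul_sq_add_le hs hds]
  · nlinarith [disjunctConst_lt]

end Constant

section Bound

variable {ι ρ : Type*} [DecidableEq ρ] {d : ℕ} {col : ι → Finset ρ} {j : ι}

namespace Disjunct

theorem mul_sq_le_two_mul_card_privatePairs (h : Disjunct d col) (hj : ¬ IsolatedCol col j)
    (hsmall : #(col j) ≤ disjunctConst * (2 * d - 1)) :
    disjunctConst * d ^ 2 ≤ 2 * #(privatePairs col j) := by
  classical
  obtain ⟨s, hs⟩ := Nat.exists_eq_add_of_le (Nat.succ_le_of_lt (h.lt_card hj))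
  have hshared := h.matchingNumberLE_sharedPairs hj
  have hsub : sharedPairs col j ⊆ powersetCard 2 (col j) := filter_subset _ _
  rw [show #(col j) - d - 1 = s by omega] at hshared
  have hmax := erdos_gallai hsub hshared
  rw [hs, Nat.succ_eq_add_one, Nat.add_sub_cancel] at hmax
  have hsplit := card_sharedPairs_add_card_privatePairs col j
  rw [hs] at hsplit hsmall
  have hnum := disjunctConst_mul_sq_add_two_mul_max_le (d := d) (s := s) (by exact_mod_cast hsmall)
  rify at hmax hsplit hnum
  rw [← hsplit] at hnum
  linarith

theorem mul_sq_le_card_biUnion_of_small [Fintype ι] [Nonempty ι] (h : Disjunct d col)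
    (hcard : #(univ.biUnion col) ≤ Fintype.card ι) (hiso : ∀ j, ¬ IsolatedCol col j)
    (hsmall : ∀ j, #(col j) ≤ disjunctConst * (2 * d - 1)) :
    disjunctConst * d ^ 2 ≤ #(univ.biUnion col) := by
  obtain ⟨j, hj⟩ := exists_two_mul_card_privatePairs_le hcard
  exact (h.mul_sq_le_two_mul_card_privatePairs (hiso j) (hsmall j)).trans (by exact_mod_cast hj)

end Disjunct

theorem disjunct_general_bound_general [Fintype ι] (hcol : Disjunct d col)
    (hcard : #(univ.biUnion col) < Fintype.card ι) :
    (15 + Real.sqrt 33) / 24 * d ^ 2 ≤ (#(univ.biUnion col) : ℝ) := by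
  classical
  change disjunctConst * d ^ 2 ≤ _
  induction d generalizing ι with
  | zero => simp
  | succ d ih =>
    obtain ⟨J, hcardJ, hiso⟩ := exists_forall_not_isolatedCol hcard
    have hJcol : Disjunct (d + 1) (fun j : J => col j) := hcol.comp Subtype.val_injective
    have hle : #(univ.biUnion fun j : J => col j) ≤ #(univ.biUnion col) :=
      card_le_card (biUnion_subset.2 fun j _ => subset_biUnion_of_mem col (mem_univ j.1))
    refine le_trans ?_ (Nat.cast_le.2 hle)
    by_cases hsmall : ∀ j : J, #(col j) ≤ disjunctConst * (2 * ↑(d + 1) - 1)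
    · have : Nonempty J := Fintype.card_pos_iff.1 (by omega)
      exact hJcol.mul_sq_le_card_biUnion_of_small hcardJ.le hiso hsmall
    · push Not at hsmall
      obtain ⟨j₀, hlarge⟩ := hsmall
      have hdel := card_biUnion_sdiff_add_card (fun j : J => col j) j₀
      have hpos : d + 1 < #(col j₀) := hJcol.lt_card (hiso j₀)
      have hcard_ne : Fintype.card {j // j ≠ j₀} = Fintype.card J - 1 := by simp
      have hrec := ih (hJcol.sdiff j₀) (by omega)
      rify at hdel
      push_cast at hlarge ⊢
      linarith

end Bound

/-- If a `t × n` binary matrix with `n > t` is `d`-disjunct,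
then `t ≥ ((15 + √33)/24) · d²`. -/
theorem disjunct_general_bound
    (d t n : ℕ) (hd : 1 ≤ d) (hn : n > t)
    (col : Fin n → Finset (Fin t))
    (hdis : Disjunct d col) :
    ((15 + Real.sqrt 33) / 24) * (d : ℝ) ^ 2 ≤ (t : ℝ) := by
  have hle : #(univ.biUnion col) ≤ t := card_finset_fin_le _
  exact (disjunct_general_bound_general hdis (by simpa using hle.trans_lt hn)).trans
    (by exact_mod_cast hle)
end

section
/- Let d ≥ 1 and let M be a t×n binary matrix that is d-disjunct, has no isolated columns, and in which every column has weight exactly d+1. Then any two distinct columns of M intersect in at most one row. -/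
open Finset

/-!
Suppose column `j` is not isolated and let `S` be a set of other columns. Each row of `j` missed
by `S` lies in some further column different from `j`, so adding one such column per missed row
to `S` gives a cover of `j` by other columns. Disjunctness says that any such cover has more than
`d` members. Taking `S = {j'}` bounds the intersection of two columns.
-/

section

variable {ι ρ : Type*} {col : ι → Finset ρ} {j : ι}

theorem not_isolatedCol_iff : ¬ IsolatedCol col j ↔ ∀ i ∈ col j, ∃ k ≠ j, i ∈ col k := by
  simp [IsolatedCol, and_comm]

variable [DecidableEq ρ]

theorem exists_card_le_subset_biUnion {A : Set ι} {R : Finset ρ}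
    (hR : ∀ i ∈ R, ∃ k ∈ A, i ∈ col k) :
    ∃ S : Finset ι, ↑S ⊆ A ∧ S.card ≤ R.card ∧ R ⊆ S.biUnion col := by
  classical
  choose f hfA hf using hR
  refine ⟨R.attach.image fun i ↦ f i.1 i.2, ?_, ?_, fun i hi ↦ ?_⟩
  · simpa [Set.subset_def] using fun k i hi (hk : f i hi = k) ↦ hk ▸ hfA i hi
  · simpa using card_image_le (s := R.attach) (f := fun i ↦ f i.1 i.2)
  · exact mem_biUnion.2 ⟨f i hi, mem_image_of_mem _ (mem_attach R ⟨i, hi⟩), hf i hi⟩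

theorem Disjunct.lt_card_add_card_sdiff_biUnion {d : ℕ} {S : Finset ι} (hdis : Disjunct d col)
    (hiso : ¬ IsolatedCol col j) (hj : j ∉ S) :
    d < S.card + (col j \ S.biUnion col).card := by
  classical
  obtain ⟨T, hTj, hTcard, hT⟩ : ∃ T : Finset ι, ↑T ⊆ ({j}ᶜ : Set ι) ∧
      T.card ≤ (col j \ S.biUnion col).card ∧ col j \ S.biUnion col ⊆ T.biUnion col :=
    exists_card_le_subset_biUnion fun i hi ↦ not_isolatedCol_iff.1 hiso i (mem_sdiff.1 hi).1
  have hjST : j ∉ S ∪ T := notMem_union.2 ⟨hj, fun hjT ↦ hTj hjT rfl⟩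
  have hcover : col j ⊆ (S ∪ T).biUnion col := by
    rw [union_biUnion]
    exact sdiff_le_iff.1 hT
  calc
    d < (S ∪ T).card := lt_of_not_ge fun hcard ↦ hdis j (S ∪ T) hjST hcard hcover
    _ ≤ S.card + T.card := card_union_le S T
    _ ≤ S.card + (col j \ S.biUnion col).card := by gcongr

theorem disjunct_constant_weight_pairwise_intersection_general {d : ℕ} {j' : ι}
    (hdis : Disjunct d col) (hiso : ¬ IsolatedCol col j) (hne : j ≠ j') :
    (col j ∩ col j').card + d ≤ (col j).card := by
  have hsdiff : d < 1 + (col j \ col j').card := by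
    simpa using hdis.lt_card_add_card_sdiff_biUnion hiso (notMem_singleton.2 hne)
  have hsplit := card_inter_add_card_sdiff (col j) (col j')
  omega

end

/-- In a `d`-disjunct matrix with no isolated columns in which every column
has weight exactly `d + 1`, any two distinct columns intersect in at most one row. -/
theorem disjunct_constant_weight_pairwise_intersection
    (d t n : ℕ) (hd : 1 ≤ d)
    (col : Fin n → Finset (Fin t))
    (hdis : Disjunct d col)
    (hiso : ∀ j, ¬ IsolatedCol col j)
    (hw : ∀ j, (col j).card = d + 1) :
    ∀ j j' : Fin n, j ≠ j' → (col j ∩ col j').card ≤ 1 := by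
  intro j j' hne
  have hbound := disjunct_constant_weight_pairwise_intersection_general hdis (hiso j) hne
  have hweight := hw j
  omega
end
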